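/- arXiv:1107.5483 — 2 statements merged into one kernel-verified Lean document; each statement's English description precedes it below -/
import Mathlib

section
/- For every real x > 0, the Riemann A-function A(x) = Σ_{n=1}^∞ (2n⁴π²x − 3n²π)·x^{1/2}·e^{−n²πx} satisfies the inversion relation A(x) = x^{−3/2}·A(1/x); equivalently, the function A_I(x) = x^{3/4}A(x) is invariant under x → 1/x. -/
/-!
Writing `x = exp (2 t)`, Poisson summation says that `G t = exp (t / 2) * θ (exp (2 t))` is an even
function of `t`, where `θ x = ∑ n : ℤ, exp (-π n² x)`. Hence `G''` is even, and so is
`G'' - G / 4 = exp (t / 2) * (4 x² θ'' x + 6 x θ' x)`. The constant term of `θ` has dropped out, so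
the sum over `ℤ` is twice the sum over positive integers, and the expression is
`4 x ^ (3 / 4) * A x`. This is the invariance of `x ^ (3 / 4) * A x` under `x ↦ 1 / x`; the other
form of the inversion relation follows by dividing by `x ^ (3 / 4)`.

Termwise differentiation of `θ` is `hasDerivAt_thetaDer`, the evenness of `G` is
`theta_exp_even`, and the computation of `G''` is in `four_mul_riemannA_even`.
-/

/-- The Riemann A-function
`A(x) = ∑_{n=1}^∞ (2 n⁴ π² x − 3 n² π) · x^{1/2} · e^{−n² π x}`. -/
noncomputable def RiemannA (x : ℝ) : ℝ :=
  ∑' n : ℕ+, (2 * (n : ℝ) ^ 4 * Real.pi ^ 2 * x - 3 * (n : ℝ) ^ 2 * Real.pi) *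
    Real.sqrt x * Real.exp (-(n : ℝ) ^ 2 * Real.pi * x)

/-- The `k`-th derivative of `θ x = ∑ n : ℤ, exp (-π n² x)`, as the termwise differentiated
series. -/
noncomputable def thetaDer (k : ℕ) (x : ℝ) : ℝ :=
  ∑' n : ℤ, (-Real.pi * (n : ℝ) ^ 2) ^ k * Real.exp (-Real.pi * (n : ℝ) ^ 2 * x)

lemma summable_thetaDer_term_norm (k : ℕ) {x : ℝ} (hx : 0 < x) :
    Summable fun n : ℤ =>
      ‖(-Real.pi * (n : ℝ) ^ 2) ^ k * Real.exp (-Real.pi * (n : ℝ) ^ 2 * x)‖ := by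
  have h := (summable_pow_mul_jacobiTheta₂_term_bound 0 hx (2 * k)).mul_left (Real.pi ^ k)
  refine h.congr fun n => ?_
  have e : (((|n| : ℤ) : ℝ)) ^ (2 * k) = ((n : ℝ) ^ 2) ^ k := by
    rw [pow_mul, Int.cast_abs, sq_abs]
  rw [e, norm_mul, norm_pow, norm_mul, norm_neg, Real.norm_of_nonneg Real.pi_pos.le,
    Real.norm_of_nonneg (sq_nonneg _), Real.norm_of_nonneg (Real.exp_pos _).le, mul_pow, ← mul_assoc]
  congr 2
  ring

lemma hasDerivAt_thetaDer (k : ℕ) {x : ℝ} (hx : 0 < x) :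
    HasDerivAt (thetaDer k) (thetaDer (k + 1) x) x := by
  have hx2 : 0 < x / 2 := by positivity
  -- On `(x / 2, ∞)` the derivatives are dominated by their values at `x / 2`.
  refine hasDerivAt_tsum_of_isPreconnected (t := Set.Ioi (x / 2)) (y₀ := x)
    (g := fun (n : ℤ) y => (-Real.pi * (n : ℝ) ^ 2) ^ k * Real.exp (-Real.pi * (n : ℝ) ^ 2 * y))
    (g' := fun (n : ℤ) y =>
      (-Real.pi * (n : ℝ) ^ 2) ^ (k + 1) * Real.exp (-Real.pi * (n : ℝ) ^ 2 * y))
    (summable_thetaDer_term_norm (k + 1) hx2) isOpen_Ioi isPreconnected_Ioi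
    (fun n y _ => ?_) (fun n y hy => ?_) (by simp [hx]) (summable_thetaDer_term_norm k hx).of_norm
    (by simp [hx])
  · have h := (((hasDerivAt_id y).const_mul (-Real.pi * (n : ℝ) ^ 2)).exp).const_mul
      ((-Real.pi * (n : ℝ) ^ 2) ^ k)
    refine h.congr_deriv ?_
    simp only [id]
    ring
  · rw [norm_mul, norm_mul _ (Real.exp (_ * (x / 2))), Real.norm_of_nonneg (Real.exp_pos _).le,
      Real.norm_of_nonneg (Real.exp_pos _).le]
    have hxy : x / 2 ≤ y := (Set.mem_Ioi.mp hy).le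
    have hc : -Real.pi * (n : ℝ) ^ 2 ≤ 0 := by
      have := mul_nonneg Real.pi_pos.le (sq_nonneg (n : ℝ))
      linarith
    gcongr ?_ * Real.exp ?_
    exact mul_le_mul_of_nonpos_left hxy hc

/-- The functional equation of `θ` in the variable `x = exp (2 * t)`. -/
lemma theta_exp_even (t : ℝ) :
    Real.exp (-t / 2) * thetaDer 0 (Real.exp (2 * -t)) =
      Real.exp (t / 2) * thetaDer 0 (Real.exp (2 * t)) := by
  have h := Real.tsum_exp_neg_mul_int_sq (Real.exp_pos (2 * t))
  have e1 : thetaDer 0 (Real.exp (2 * t)) =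
      ∑' n : ℤ, Real.exp (-Real.pi * Real.exp (2 * t) * (n : ℝ) ^ 2) := by
    unfold thetaDer
    congr with n
    rw [pow_zero, one_mul]
    ring_nf
  have e2 : thetaDer 0 (Real.exp (2 * -t)) =
      ∑' n : ℤ, Real.exp (-Real.pi / Real.exp (2 * t) * (n : ℝ) ^ 2) := by
    unfold thetaDer
    congr with n
    rw [pow_zero, one_mul, mul_neg, Real.exp_neg]
    ring_nf
  have e3 : Real.exp (2 * t) ^ (1 / 2 : ℝ) = Real.exp t := by
    rw [← Real.exp_mul]
    ring_nf
  rw [← e1, ← e2, e3] at h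
  rw [h, one_div, ← Real.exp_neg, ← mul_assoc, ← Real.exp_add]
  ring_nf

/-- With `c = 1` or `c = -1`: differentiation exchanges even and odd functions. -/
lemma deriv_comp_neg_eq {f f' : ℝ → ℝ} (hf : ∀ t, HasDerivAt f (f' t) t) {c : ℝ}
    (h : ∀ t, f (-t) = c * f t) (t : ℝ) : f' (-t) = -c * f' t := by
  have h1 : HasDerivAt (fun t => f (-t)) (-f' (-t)) t :=
    ((hf (-t)).comp t (hasDerivAt_neg t)).congr_deriv (by ring)
  have h2 : HasDerivAt (fun t => f (-t)) (c * f' t) t := by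
    simpa only [h] using (hf t).const_mul c
  linarith [h1.unique h2]

lemma four_mul_riemannA (x : ℝ) (hx : 0 < x) :
    4 * (Real.sqrt x * RiemannA x) = 4 * x ^ 2 * thetaDer 2 x + 6 * x * thetaDer 1 x := by
  have s1 := (summable_thetaDer_term_norm 1 hx).of_norm
  have s2 := (summable_thetaDer_term_norm 2 hx).of_norm
  unfold thetaDer
  rw [← tsum_mul_left, ← tsum_mul_left, ← (s2.mul_left _).tsum_add (s1.mul_left _),
    tsum_int_eq_zero_add_two_mul_tsum_pnat (fun n => by simp)
      ((s2.mul_left _).add (s1.mul_left _)), RiemannA, ← tsum_mul_left, ← tsum_mul_left,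
    nsmul_eq_mul, ← tsum_mul_left]
  simp only [Int.cast_zero, Int.cast_natCast]
  norm_num
  congr with n
  have hs := Real.mul_self_sqrt hx.le
  have e : -((n : ℝ) ^ 2 * Real.pi * x) = -(Real.pi * (n : ℝ) ^ 2 * x) := by ring
  rw [e]
  linear_combination (4 * (2 * (n : ℝ) ^ 4 * Real.pi ^ 2 * x - 3 * (n : ℝ) ^ 2 * Real.pi) *
    Real.exp (-(Real.pi * (n : ℝ) ^ 2 * x))) * hs

/-- The left- and right-hand sides are `G'' - G / 4` at `-t` and `t`, where
`G t = exp (t / 2) * θ (exp (2 * t))`. -/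
lemma four_mul_riemannA_even (t : ℝ) :
    Real.exp (-t / 2) * (4 * (Real.sqrt (Real.exp (2 * -t)) * RiemannA (Real.exp (2 * -t)))) =
      Real.exp (t / 2) * (4 * (Real.sqrt (Real.exp (2 * t)) * RiemannA (Real.exp (2 * t)))) := by
  have hE (t : ℝ) : HasDerivAt (fun t => Real.exp (2 * t)) (2 * Real.exp (2 * t)) t := by
    refine (((hasDerivAt_id t).const_mul 2).exp).congr_deriv ?_
    simp only [id]
    ring
  have hH (t : ℝ) : HasDerivAt (fun t => Real.exp (t / 2)) (Real.exp (t / 2) / 2) t := by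
    refine (((hasDerivAt_id t).div_const 2).exp).congr_deriv ?_
    simp only [id]
    ring
  have hT (k : ℕ) (t : ℝ) : HasDerivAt (fun t => thetaDer k (Real.exp (2 * t)))
      (thetaDer (k + 1) (Real.exp (2 * t)) * (2 * Real.exp (2 * t))) t :=
    HasDerivAt.comp (h₂ := thetaDer k) t (hasDerivAt_thetaDer k (Real.exp_pos (2 * t))) (hE t)
  have hG1 (t : ℝ) : HasDerivAt (fun t => Real.exp (t / 2) * thetaDer 0 (Real.exp (2 * t)))
      (Real.exp (t / 2) * (thetaDer 0 (Real.exp (2 * t)) / 2 +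
        2 * (Real.exp (2 * t) * thetaDer 1 (Real.exp (2 * t))))) t := by
    refine ((hH t).mul (hT 0 t)).congr_deriv ?_
    ring
  have hG2 (t : ℝ) := (hH t).mul (((hT 0 t).div_const 2).add
    (((hE t).mul (hT 1 t)).const_mul 2))
  have h0 := theta_exp_even t
  have h1 := deriv_comp_neg_eq hG1 (c := 1) (fun t => by simpa using theta_exp_even t)
  have h2 := deriv_comp_neg_eq hG2 h1 t
  simp only [Pi.mul_apply, Pi.add_apply] at h2
  norm_num at h2
  rw [four_mul_riemannA _ (Real.exp_pos _), four_mul_riemannA _ (Real.exp_pos _)]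
  norm_num at h0 ⊢
  linear_combination h2 - h0 / 4

/-- For every `x > 0`, `A(x) = x^{−3/2} · A(1/x)`; equivalently,
`A_I(x) = x^{3/4} A(x)` is invariant under `x → 1/x`. -/
theorem riemannA_inversion (x : ℝ) (hx : 0 < x) :
    RiemannA x = x ^ (-(3 : ℝ) / 2) * RiemannA (1 / x) ∧
      x ^ ((3 : ℝ) / 4) * RiemannA x = (1 / x) ^ ((3 : ℝ) / 4) * RiemannA (1 / x) := by
  obtain ⟨t, rfl⟩ : ∃ t, x = Real.exp (2 * t) :=
    ⟨Real.log x / 2, by rw [mul_div_cancel₀ _ two_ne_zero, Real.exp_log hx]⟩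
  have hinv : 1 / Real.exp (2 * t) = Real.exp (2 * -t) := by
    rw [mul_neg, Real.exp_neg, one_div]
  have hs (t : ℝ) : Real.sqrt (Real.exp (2 * t)) = Real.exp t := by
    rw [← Real.exp_half]
    ring_nf
  have h := four_mul_riemannA_even t
  have hp (t : ℝ) : Real.exp (2 * t) ^ ((3 : ℝ) / 4) = Real.exp (t / 2) * Real.exp t := by
    rw [← Real.exp_mul, ← Real.exp_add]
    ring_nf
  have key : Real.exp (2 * t) ^ ((3 : ℝ) / 4) * RiemannA (Real.exp (2 * t)) =
      Real.exp (2 * -t) ^ ((3 : ℝ) / 4) * RiemannA (Real.exp (2 * -t)) := by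
    rw [hs, hs] at h
    rw [hp, hp]
    linear_combination -h / 4
  rw [hinv]
  refine ⟨?_, key⟩
  have hne : Real.exp (2 * t) ^ ((3 : ℝ) / 4) ≠ 0 := (Real.rpow_pos_of_pos hx _).ne'
  refine mul_left_cancel₀ hne (key.trans ?_)
  rw [← mul_assoc, ← Real.rpow_add hx, ← Real.exp_mul, ← Real.exp_mul]
  ring_nf
end

section
/- For every real t, the Xi-function associated with A_I(x) = e^{−x} is strictly positive: ∫₁^∞ e^{−x}·x^{−1}·2·cos((t/2)·log x) dx > 0. (This Xi-function equals the symmetrized incomplete gamma function Γ(it/2, 1) + Γ(−it/2, 1), which therefore has no real zeros.) -/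
/-!
With `a = t / 2` and `x = e ^ u`, the integral is twice the cosine transform over `u > 0` of
`f u = exp (-e ^ u)`, which is convex on `[0, ∞)` and decays at infinity. Positivity is then
Pólya's criterion: two integrations by parts give, for `a ≠ 0`,
`∫ f u * cos (a * u) = a⁻² * ∫ f'' u * (1 - cos (a * u))`, an integral of a nonnegative function.
In the variable `x`, the two integrations by parts amount to the primitive `xiPrimitive` below,
which vanishes at `1` and at infinity, and `f'' u du` becomes `(x - 1) * exp (-x) dx`.
-/

open MeasureTheory Set Filter Topology

/-- The sum of the boundary terms of the two integrations by parts, in the variable `x`. -/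
noncomputable def xiPrimitive (a x : ℝ) : ℝ :=
  Real.exp (-x) * Real.sin (a * Real.log x) / a
    + x * Real.exp (-x) * (1 - Real.cos (a * Real.log x)) / a ^ 2

lemma hasDerivAt_xiPrimitive {a : ℝ} (ha : a ≠ 0) {x : ℝ} (hx : 0 < x) :
    HasDerivAt (xiPrimitive a)
      (Real.exp (-x) * x⁻¹ * Real.cos (a * Real.log x)
        - (x - 1) * Real.exp (-x) * (1 - Real.cos (a * Real.log x)) / a ^ 2) x := by
  have hl : HasDerivAt (fun y => a * Real.log y) (a * x⁻¹) x :=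
    (Real.hasDerivAt_log hx.ne').const_mul a
  have he : HasDerivAt (fun y : ℝ => Real.exp (-y)) (Real.exp (-x) * (-1)) x :=
    (hasDerivAt_neg x).exp
  have h1 := (he.mul hl.sin).div_const a
  have h2 := (((hasDerivAt_id x).mul he).mul (hl.cos.const_sub 1)).div_const (a ^ 2)
  refine (h1.add h2).congr_deriv ?_
  simp only [id, Pi.mul_apply]
  field_simp
  ring

lemma integrableOn_exp_neg_Ioi_one : IntegrableOn (fun x : ℝ => Real.exp (-x)) (Ioi 1) :=
  integrableOn_exp_neg_Ioi 1

lemma integrableOn_mul_exp_neg_Ioi_one :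
    IntegrableOn (fun x : ℝ => x * Real.exp (-x)) (Ioi 1) := by
  have h := (Real.GammaIntegral_convergent (s := 2) (by norm_num)).mono_set
    (Ioi_subset_Ioi (zero_le_one' ℝ))
  refine h.congr_fun (fun x _ => ?_) measurableSet_Ioi
  norm_num
  ring

lemma integrableOn_xi_integrand (a : ℝ) :
    IntegrableOn (fun x : ℝ => Real.exp (-x) * x⁻¹ * Real.cos (a * Real.log x)) (Ioi 1) := by
  refine Integrable.mono' integrableOn_exp_neg_Ioi_one
    (Measurable.aestronglyMeasurable (by fun_prop)) ?_
  filter_upwards [ae_restrict_mem measurableSet_Ioi] with x hx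
  have hx' : (1 : ℝ) < x := hx
  have hi : |x⁻¹| ≤ 1 := by
    rw [abs_of_pos (by positivity)]
    exact inv_le_one_of_one_le₀ hx'.le
  rw [Real.norm_eq_abs, abs_mul, abs_mul, Real.abs_exp, mul_assoc]
  exact mul_le_of_le_one_right (Real.exp_pos _).le
    (mul_le_one₀ hi (abs_nonneg _) (Real.abs_cos_le_one _))

lemma integrableOn_polya_integrand (a : ℝ) :
    IntegrableOn (fun x : ℝ => (x - 1) * Real.exp (-x) * (1 - Real.cos (a * Real.log x)) / a ^ 2)
      (Ioi 1) := by
  refine Integrable.div_const ?_ _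
  refine Integrable.mono' (integrableOn_mul_exp_neg_Ioi_one.const_mul 2)
    (Measurable.aestronglyMeasurable (by fun_prop)) ?_
  filter_upwards [ae_restrict_mem measurableSet_Ioi] with x hx
  have hx' : (1 : ℝ) < x := hx
  have hc := Real.cos_le_one (a * Real.log x)
  have hc' := Real.neg_one_le_cos (a * Real.log x)
  have he := Real.exp_pos (-x)
  rw [Real.norm_eq_abs, abs_of_nonneg
    (mul_nonneg (mul_nonneg (by linarith) he.le) (by linarith)), mul_comm (2 : ℝ)]
  exact mul_le_mul (mul_le_mul_of_nonneg_right (by linarith) he.le) (by linarith) (by linarith)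
    (by positivity)

lemma tendsto_xiPrimitive_atTop (a : ℝ) : Tendsto (xiPrimitive a) atTop (𝓝 0) := by
  have h0 : Tendsto (fun x : ℝ => Real.exp (-x)) atTop (𝓝 0) :=
    Real.tendsto_exp_neg_atTop_nhds_zero
  have h1 : Tendsto (fun x : ℝ => x * Real.exp (-x)) atTop (𝓝 0) := by
    simpa using Real.tendsto_pow_mul_exp_neg_atTop_nhds_zero 1
  have hs : Tendsto (fun x : ℝ => Real.exp (-x) * Real.sin (a * Real.log x)) atTop (𝓝 0) := by
    refine squeeze_zero_norm (fun x => ?_) h0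
    rw [Real.norm_eq_abs, abs_mul, Real.abs_exp]
    exact mul_le_of_le_one_right (Real.exp_pos _).le (Real.abs_sin_le_one _)
  have hc : Tendsto (fun x : ℝ => x * Real.exp (-x) * (1 - Real.cos (a * Real.log x)))
      atTop (𝓝 0) := by
    refine squeeze_zero_norm' ?_ (by simpa using h1.mul_const 2)
    filter_upwards [eventually_gt_atTop 0] with x hx
    have hc := Real.cos_le_one (a * Real.log x)
    have hc' := Real.neg_one_le_cos (a * Real.log x)
    rw [Real.norm_eq_abs, abs_of_nonneg (mul_nonneg (by positivity) (by linarith))]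
    exact mul_le_mul_of_nonneg_left (by linarith) (by positivity)
  have h := (hs.div_const a).add (hc.div_const (a ^ 2))
  rw [zero_div, zero_div, add_zero] at h
  exact h

/-- The identity behind Pólya's criterion: two integrations by parts, without boundary terms. -/
lemma integral_xi_eq {a : ℝ} (ha : a ≠ 0) :
    ∫ x in Ioi (1 : ℝ), Real.exp (-x) * x⁻¹ * Real.cos (a * Real.log x)
      = ∫ x in Ioi (1 : ℝ),
          (x - 1) * Real.exp (-x) * (1 - Real.cos (a * Real.log x)) / a ^ 2 := by
  have h := integral_Ioi_of_hasDerivAt_of_tendsto'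
    (fun x (hx : x ∈ Ici (1 : ℝ)) => hasDerivAt_xiPrimitive ha (zero_lt_one.trans_le hx))
    ((integrableOn_xi_integrand a).sub (integrableOn_polya_integrand a))
    (tendsto_xiPrimitive_atTop a)
  rw [integral_sub (integrableOn_xi_integrand a) (integrableOn_polya_integrand a)] at h
  have h1 : xiPrimitive a 1 = 0 := by simp [xiPrimitive]
  linarith

lemma integral_polya_pos {a : ℝ} (ha : a ≠ 0) :
    0 < ∫ x in Ioi (1 : ℝ),
          (x - 1) * Real.exp (-x) * (1 - Real.cos (a * Real.log x)) / a ^ 2 := by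
  have hnn : 0 ≤ᵐ[volume.restrict (Ioi (1 : ℝ))]
      fun x => (x - 1) * Real.exp (-x) * (1 - Real.cos (a * Real.log x)) / a ^ 2 := by
    filter_upwards [ae_restrict_mem measurableSet_Ioi] with x hx
    have hx' : (1 : ℝ) < x := hx
    have hc := Real.cos_le_one (a * Real.log x)
    exact div_nonneg (mul_nonneg (mul_nonneg (by linarith) (Real.exp_pos _).le) (by linarith))
      (sq_nonneg a)
  rw [setIntegral_pos_iff_support_of_nonneg_ae hnn (integrableOn_polya_integrand a)]
  have ha' : 0 < |a| := abs_pos.mpr ha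
  -- On `(1, exp (1 / |a|))` one has `0 < |a * log x| < 1 < 2 * π`, so the cosine is not `1`.
  have hpos : 0 < volume (Ioo (1 : ℝ) (Real.exp (1 / |a|))) := by
    rw [Real.volume_Ioo, ENNReal.ofReal_pos, sub_pos]
    exact Real.one_lt_exp_iff.mpr (by positivity)
  refine hpos.trans_le (measure_mono fun x hx => ⟨?_, hx.1⟩)
  have hlog : 0 < Real.log x := Real.log_pos hx.1
  have hlog' : Real.log x < 1 / |a| :=
    (Real.log_lt_iff_lt_exp (zero_lt_one.trans hx.1)).mpr hx.2
  have hlt : |a * Real.log x| < 1 := by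
    rw [abs_mul, abs_of_pos hlog, mul_comm]
    exact (lt_div_iff₀ ha').mp hlog'
  obtain ⟨hl, hr⟩ := abs_lt.mp hlt
  have hpi := Real.pi_gt_three
  have hcos : Real.cos (a * Real.log x) ≠ 1 := fun h =>
    mul_ne_zero ha hlog.ne'
      ((Real.cos_eq_one_iff_of_lt_of_lt (by linarith) (by linarith)).mp h)
  exact div_ne_zero (mul_ne_zero (mul_ne_zero (sub_pos.mpr hx.1).ne' (Real.exp_pos _).ne')
    (sub_ne_zero.mpr hcos.symm)) (pow_ne_zero 2 ha)

lemma integral_exp_neg_mul_inv_pos : 0 < ∫ x in Ioi (1 : ℝ), Real.exp (-x) * x⁻¹ := by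
  have hint : IntegrableOn (fun x : ℝ => Real.exp (-x) * x⁻¹) (Ioi 1) := by
    simpa using integrableOn_xi_integrand 0
  have hpos : ∀ x ∈ Ioi (1 : ℝ), 0 < Real.exp (-x) * x⁻¹ := fun x hx =>
    mul_pos (Real.exp_pos _) (inv_pos.mpr (zero_lt_one.trans hx))
  rw [setIntegral_pos_iff_support_of_nonneg_ae
    ((ae_restrict_mem measurableSet_Ioi).mono fun x hx => (hpos x hx).le) hint,
    inter_eq_right.mpr fun x hx => Function.mem_support.mpr (hpos x hx).ne']
  simp

/-- The Xi-function associated with `A_I(x) = e^{−x}` (the symmetrized incomplete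
gamma function `Γ(it/2,1) + Γ(−it/2,1)`) is strictly positive for every real `t`. -/
theorem xi_exp_pos (t : ℝ) :
    0 < ∫ x in Set.Ioi (1 : ℝ),
        Real.exp (-x) * x⁻¹ * 2 * Real.cos ((t / 2) * Real.log x) := by
  have hfactor : ∫ x in Ioi (1 : ℝ), Real.exp (-x) * x⁻¹ * 2 * Real.cos ((t / 2) * Real.log x)
      = 2 * ∫ x in Ioi (1 : ℝ), Real.exp (-x) * x⁻¹ * Real.cos ((t / 2) * Real.log x) := by
    rw [← integral_const_mul]
    congr 1 with x
    ring
  rw [hfactor]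
  refine mul_pos two_pos ?_
  rcases eq_or_ne t 0 with rfl | ht
  · simpa using integral_exp_neg_mul_inv_pos
  · have ha : t / 2 ≠ 0 := div_ne_zero ht two_ne_zero
    rw [integral_xi_eq ha]
    exact integral_polya_pos ha
end
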